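/- arXiv:2210.07876 — 5 statements merged into one kernel-verified Lean document; each statement's English description precedes it below -/
import Mathlib

section
/- Coupling Lemma: Let P and Q be probability distributions on countable sets X and Y respectively, let Z be a set, and let f : X → Z and g : Y → Z be functions such that f(X) ≈_{ε,δ} g(Y) when X ∼ P and Y ∼ Q. Fix a default element ⊥ ∈ Y and, for each x ∈ X, let Q_x be the distribution of Y ∼ Q conditioned on the event g(Y) = f(x) when Q({y : g(y) = f(x)}) > 0, and the point mass at ⊥ otherwise. If one samples X ∼ P and then Y' ∼ Q_X, then: (1) Y' ≈_{ε,δ} Y, and (2) f(X) = g(Y') with probability at least 1 − δ. -/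
/-!
Let `c = e^ε`, let `a`, `b` be the laws of `f(X)`, `g(Y)`, and let `K z` be `Q` given `g(Y) = z`
(with the default at `bot`). Then the law of `Y'` is `a.bind K`, while `b.bind K = Q`
(`map_bind_condOn`, disintegration of `Q` along `g`). Part (1) is therefore the data-processing
inequality for the randomized map `K` (`pmfIndist.bind`). Data processing in turn reduces to
`∑ a w ≤ c ∑ b w + δ` for weights `0 ≤ w ≤ 1`, which follows by bounding
`a w ≤ c b w + (a - c b)⁺` and applying the hypothesis to the event `{a > c b}`.

For part (2), given `X = x` the event `f(X) = g(Y')` has conditional probability `1` as soon as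
`b (f x) ≠ 0`, and the event `{z | b z = 0}` has `a`-probability at most `c * 0 + δ = δ`.
-/

open scoped ENNReal

/-- `(ε,δ)`-indistinguishability of two probability mass functions on a countable set:
for every event `E`, `P(E) ≤ e^ε·Q(E) + δ` and `Q(E) ≤ e^ε·P(E) + δ`. -/
def pmfIndist {X : Type*} (ε δ : ℝ) (P Q : PMF X) : Prop :=
  ∀ E : Set X,
    P.toOuterMeasure E ≤ ENNReal.ofReal (Real.exp ε) * Q.toOuterMeasure E + ENNReal.ofReal δ ∧
    Q.toOuterMeasure E ≤ ENNReal.ofReal (Real.exp ε) * P.toOuterMeasure E + ENNReal.ofReal δ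

open Classical in
/-- The distribution of `Y ∼ Q` conditioned on the event `Y ∈ s` when `Q(s) > 0`,
and the point mass at `bot` otherwise. -/
noncomputable def condOn {Y : Type*} (Q : PMF Y) (bot : Y) (s : Set Y) : PMF Y :=
  if h : ∃ y ∈ s, Q y ≠ 0 then Q.filter s h else PMF.pure bot

/-- One-sided indistinguishability on events extends to `[0,1]`-valued test functions. -/
theorem tsum_mul_le_of_event_le {Z : Type*} {c d : ℝ≥0∞} (hc : c ≠ ∞) (a b : PMF Z)
    (h : ∀ E : Set Z, a.toOuterMeasure E ≤ c * b.toOuterMeasure E + d)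
    (w : Z → ℝ≥0∞) (hw : ∀ z, w z ≤ 1) :
    ∑' z, a z * w z ≤ c * ∑' z, b z * w z + d := by
  have hS := h {z | c * b z < a z}
  set S : Set Z := {z | c * b z < a z} with hSdef
  simp only [PMF.toOuterMeasure_apply] at hS
  have hfin : ∑' z, c * S.indicator b z ≠ ∞ := by
    rw [ENNReal.tsum_mul_left]
    refine ENNReal.mul_ne_top hc (ne_top_of_le_ne_top b.tsum_coe_ne_top ?_)
    exact ENNReal.tsum_le_tsum fun z => Set.indicator_le_self' (fun _ _ => zero_le) z
  have hexc : ∑' z, (a z - c * b z) ≤ d := by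
    have heq : ∀ z, a z - c * b z = S.indicator a z - c * S.indicator b z := by
      intro z
      by_cases hz : z ∈ S
      · simp [hz]
      · have hz' : a z ≤ c * b z := not_lt.mp hz
        simp [hz, tsub_eq_zero_of_le hz']
    have hle : (fun z => c * S.indicator b z) ≤ fun z => S.indicator a z := by
      intro z
      by_cases hz : z ∈ S
      · have hz' : c * b z < a z := hz
        simpa [hz] using hz'.le
      · simp [hz]
    rw [tsum_congr heq, ← ENNReal.add_le_add_iff_right hfin, ← ENNReal.tsum_add,
      tsum_congr fun z => tsub_add_cancel_of_le (hle z), ENNReal.tsum_mul_left, add_comm d]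
    exact hS
  calc ∑' z, a z * w z ≤ ∑' z, (c * (b z * w z) + (a z - c * b z)) := by
        refine ENNReal.tsum_le_tsum fun z => ?_
        calc a z * w z ≤ (c * b z + (a z - c * b z)) * w z := by
              gcongr
              exact le_add_tsub
          _ = c * (b z * w z) + (a z - c * b z) * w z := by ring
          _ ≤ c * (b z * w z) + (a z - c * b z) := by
              gcongr
              exact mul_le_of_le_one_right' (hw z)
    _ = c * ∑' z, b z * w z + ∑' z, (a z - c * b z) := by
        rw [ENNReal.tsum_add, ENNReal.tsum_mul_left]
    _ ≤ _ := by gcongr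

theorem PMF.toOuterMeasure_le_one {Z : Type*} (a : PMF Z) (E : Set Z) :
    a.toOuterMeasure E ≤ 1 := by
  rw [PMF.toOuterMeasure_apply, ← a.tsum_coe]
  exact ENNReal.tsum_le_tsum fun z => Set.indicator_le_self' (fun _ _ => zero_le) z

/-- Data processing: indistinguishability is preserved by a randomized map. -/
theorem pmfIndist.bind {Z Y : Type*} {ε δ : ℝ} {a b : PMF Z} (h : pmfIndist ε δ a b)
    (K : Z → PMF Y) : pmfIndist ε δ (a.bind K) (b.bind K) := by
  intro E
  simp only [PMF.toOuterMeasure_bind_apply]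
  exact ⟨tsum_mul_le_of_event_le ENNReal.ofReal_ne_top a b (fun E => (h E).1) _
      fun z => (K z).toOuterMeasure_le_one E,
    tsum_mul_le_of_event_le ENNReal.ofReal_ne_top b a (fun E => (h E).2) _
      fun z => (K z).toOuterMeasure_le_one E⟩

theorem condOn_eq_filter {Y : Type*} (Q : PMF Y) (bot : Y) (s : Set Y)
    (h : ∃ y ∈ s, y ∈ Q.support) : condOn Q bot s = Q.filter s h :=
  dif_pos h

/-- Disintegration of `Q` along `g`: drawing `z` from the law of `g(Y)` and then `Y` conditioned
on `g(Y) = z` gives back `Q`. -/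
theorem map_bind_condOn {Y Z : Type*} (Q : PMF Y) (g : Y → Z) (bot : Y) :
    (Q.map g).bind (fun z => condOn Q bot {y | g y = z}) = Q := by
  rw [PMF.bind_map]
  ext y
  rw [PMF.bind_apply]
  have hterm : ∀ y', Q y' * condOn Q bot {v | g v = g y'} y =
      {v | g v = g y}.indicator Q y' * (Q y * (∑' v, {v | g v = g y}.indicator Q v)⁻¹) := by
    intro y'
    by_cases hQ : Q y' = 0
    · simp [hQ, Set.indicator]
    have hex : ∃ v ∈ {v | g v = g y'}, v ∈ Q.support := ⟨y', rfl, hQ⟩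
    rw [condOn_eq_filter Q bot _ hex, PMF.filter_apply]
    by_cases hg : g y' = g y
    · simp [hg]
    · have hg' : ¬ g y = g y' := fun e => hg e.symm
      simp [hg, hg']
  simp only [Function.comp_apply]
  rw [tsum_congr hterm, ENNReal.tsum_mul_right]
  set T := ∑' v, {v | g v = g y}.indicator Q v with hT
  by_cases hy : Q y = 0
  · simp [hy]
  have hT0 : T ≠ 0 := by
    intro h0
    have := ENNReal.tsum_eq_zero.mp h0 y
    simp at this
    exact hy this
  have hTtop : T ≠ ∞ := by
    refine ne_top_of_le_ne_top Q.tsum_coe_ne_top ?_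
    exact ENNReal.tsum_le_tsum fun z => Set.indicator_le_self' (fun _ _ => zero_le) z
  rw [mul_left_comm, ENNReal.mul_inv_cancel hT0 hTtop, mul_one]

theorem condOn_toOuterMeasure_self {Y : Type*} (Q : PMF Y) (bot : Y) (s : Set Y)
    (h : ∃ y ∈ s, y ∈ Q.support) : (condOn Q bot s).toOuterMeasure s = 1 := by
  rw [PMF.toOuterMeasure_apply_eq_one_iff, condOn_eq_filter Q bot s h, PMF.support_filter]
  exact Set.inter_subset_left


/-- Coupling Lemma: if `f(X) ≈_{ε,δ} g(Y)` for `X ∼ P`, `Y ∼ Q`, then sampling `X ∼ P`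
and `Y' ∼ Q_X` (where `Q_x` is `Q` conditioned on `g(Y) = f(x)`, defaulting to the point
mass at `bot`) yields `Y' ≈_{ε,δ} Y`, and `f(X) = g(Y')` with probability at least `1 − δ`. -/
theorem coupling_lemma {X Y Z : Type*} [Countable X] [Countable Y]
    (ε δ : ℝ) (hε : 0 ≤ ε) (hδ0 : 0 ≤ δ) (hδ1 : δ < 1)
    (P : PMF X) (Q : PMF Y) (f : X → Z) (g : Y → Z) (bot : Y)
    (h : pmfIndist ε δ (P.map f) (Q.map g)) :
    pmfIndist ε δ (P.bind fun x => condOn Q bot {y | g y = f x}) Q ∧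
    ENNReal.ofReal (1 - δ) ≤
      (P.bind fun x => (condOn Q bot {y | g y = f x}).map fun y => (x, y)).toOuterMeasure
        {p : X × Y | f p.1 = g p.2} := by
  constructor
  · have hK := h.bind fun z => condOn Q bot {y | g y = z}
    rw [map_bind_condOn, PMF.bind_map] at hK
    exact hK
  · set S : Set Z := {z | Q.map g z = 0} with hS
    have hSc : (P.map f).toOuterMeasure S ≤ ENNReal.ofReal δ := by
      have hb : (Q.map g).toOuterMeasure S = 0 := by
        rw [PMF.toOuterMeasure_apply_eq_zero_iff, Set.disjoint_left]
        intro z hz hzS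
        exact (PMF.mem_support_iff _ _).mp hz hzS
      simpa [hb] using (h S).1
    have hone : 1 ≤ (P.map f).toOuterMeasure Sᶜ + (P.map f).toOuterMeasure S := by
      have hu : (P.map f).toOuterMeasure (Sᶜ ∪ S) = 1 := by
        rw [PMF.toOuterMeasure_apply_eq_one_iff]
        simp
      rw [← hu]
      exact MeasureTheory.measure_union_le _ _
    have hge : ENNReal.ofReal (1 - δ) ≤ (P.map f).toOuterMeasure Sᶜ := by
      rw [ENNReal.ofReal_sub _ hδ0, ENNReal.ofReal_one, tsub_le_iff_right]
      exact hone.trans (by gcongr)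
    refine hge.trans ?_
    rw [PMF.toOuterMeasure_map_apply, PMF.toOuterMeasure_apply, PMF.toOuterMeasure_bind_apply]
    refine ENNReal.tsum_le_tsum fun x => ?_
    by_cases hx : x ∈ f ⁻¹' Sᶜ
    · have hex : ∃ y ∈ {y | g y = f x}, y ∈ Q.support := by
        have hx' : f x ∈ (Q.map g).support := hx
        rw [PMF.mem_support_map_iff] at hx'
        obtain ⟨y, hy, hgy⟩ := hx'
        exact ⟨y, hgy, hy⟩
      have hpre : (fun y => (x, y)) ⁻¹' {p : X × Y | f p.1 = g p.2} = {y | g y = f x} := by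
        ext y
        exact eq_comm
      rw [PMF.toOuterMeasure_map_apply, hpre, condOn_toOuterMeasure_self Q bot _ hex, mul_one]
      exact Set.indicator_le_self' (fun _ _ => zero_le) x
    · rw [Set.indicator_of_notMem hx]
      exact zero_le
end

section
/- Let ρ be a probability distribution on a countable set R, let M be a deterministic function taking an input and a tape r ∈ R to an output in a set Z, and let D, D' be two inputs such that M(D; R) ≈_{ε,δ} M(D'; R) for R ∼ ρ. Then there exists a joint distribution of a pair (R, R') on R × R such that: the marginal distribution of R equals ρ; the marginal distribution of R' is (ε,δ)-indistinguishable from ρ; and M(D; R) = M(D'; R') with probability at least 1 − δ. -/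
/-!
Write `P`, `Q` for the laws of `M D` and `M D'` under `ρ`, and `c = e^ε`. Given `R = r` with output
`z = M D r`, draw `R'` from `ρ` conditioned on `M D' = z` if `Q z ≠ 0`, and afresh from `ρ` otherwise
(`resample`). The outputs agree unless `Q (M D R) = 0`, which has probability
`s = P {Q = 0} ≤ c * Q {Q = 0} + δ = δ`.

The law of `R'` is `μ₀ r + ρ r * s`, where `μ₀ r = ρ r * (Q z)⁻¹ * P z` and `z = M D' r`
(`bind_resample_apply`). The density of `μ₀` with respect to `ρ` depends only on the output `z`,
so the worst event for comparing `μ₀` with `ρ` is a preimage under `M D'` of an event `A ⊆ {Q ≠ 0}`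
(`sum_indicator_le_of_worst`), on which `μ₀` has mass `P A` and `ρ` has mass `Q A`
(`tsum_reweight_preimage`). The additional mass `s` costs nothing: `P A + s = P (A ∪ {Q = 0})` while
`Q A = Q (A ∪ {Q = 0})`, so the hypothesis applied to `A ∪ {Q = 0}` absorbs it.
-/

open scoped ENNReal

/-- The likelihood-ratio argument: if `T` is the set where `a` exceeds `c * b`, then an
indistinguishability bound on `T` (with an additional mass `t` on the left) implies the same bound
on every event. -/
lemma sum_indicator_le_of_worst {X : Type*} (a b : X → ℝ≥0∞) (c t d : ℝ≥0∞) (T E : Set X)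
    (hT : ∀ x ∈ T, c * b x ≤ a x) (hT' : ∀ x ∉ T, a x ≤ c * b x)
    (hfin : c * ∑' x, T.indicator b x ≠ ∞)
    (h : ∑' x, T.indicator a x + t ≤ c * ∑' x, T.indicator b x + d) :
    ∑' x, E.indicator a x + t ≤ c * ∑' x, E.indicator b x + d := by
  have key : ∑' x, E.indicator a x + c * ∑' x, T.indicator b x
      ≤ ∑' x, T.indicator a x + c * ∑' x, E.indicator b x := by
    rw [← ENNReal.tsum_mul_left, ← ENNReal.tsum_mul_left, ← ENNReal.tsum_add, ← ENNReal.tsum_add]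
    refine ENNReal.tsum_le_tsum fun x => ?_
    by_cases hxT : x ∈ T <;> by_cases hxE : x ∈ E
    · simp [hxT, hxE]
    · simpa [hxT, hxE] using hT x hxT
    · simpa [hxT, hxE] using hT' x hxT
    · simp [hxT, hxE]
  refine (ENNReal.add_le_add_iff_right hfin).1 ?_
  calc ∑' x, E.indicator a x + t + c * ∑' x, T.indicator b x
      = (∑' x, E.indicator a x + c * ∑' x, T.indicator b x) + t := by ring
    _ ≤ (∑' x, T.indicator a x + c * ∑' x, E.indicator b x) + t := by gcongr
    _ = (∑' x, T.indicator a x + t) + c * ∑' x, E.indicator b x := by ring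
    _ ≤ (c * ∑' x, T.indicator b x + d) + c * ∑' x, E.indicator b x := by gcongr
    _ = _ := by ring

lemma tsum_mul_comp_eq_map {R Z : Type*} (ρ : PMF R) (F : R → Z) (g : Z → ℝ≥0∞) :
    ∑' r, ρ r * g (F r) = ∑' z, (ρ.map F) z * g z := by
  classical
  have h1 : ∀ z, (ρ.map F) z * g z = ∑' r, if z = F r then ρ r * g (F r) else 0 := by
    intro z
    rw [PMF.map_apply, ← ENNReal.tsum_mul_right]
    refine tsum_congr fun r => ?_
    by_cases hz : z = F r <;> simp [hz]
  simp_rw [h1]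
  rw [ENNReal.tsum_comm]
  exact tsum_congr fun r => (tsum_ite_eq (F r) fun _ => ρ r * g (F r)).symm

lemma tsum_indicator_fiber {R Z : Type*} (ρ : PMF R) (F : R → Z) (z : Z) :
    ∑' r, {r | F r = z}.indicator ρ r = (ρ.map F) z := by
  classical
  rw [PMF.map_apply]
  refine tsum_congr fun r => ?_
  by_cases hz : z = F r
  · simp [hz]
  · simp [hz, Ne.symm hz]

open Classical in
/-- `ρ` conditioned on the event `F = z`, or `ρ` itself if that event is null. -/
noncomputable def resample {R Z : Type*} (ρ : PMF R) (F : R → Z) (z : Z) : PMF R :=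
  if h : ∃ r ∈ {r | F r = z}, r ∈ ρ.support then ρ.filter {r | F r = z} h else ρ

lemma exists_fiber_iff {R Z : Type*} (ρ : PMF R) (F : R → Z) (z : Z) :
    (∃ r ∈ {r | F r = z}, r ∈ ρ.support) ↔ (ρ.map F) z ≠ 0 := by
  rw [← PMF.mem_support_iff, PMF.mem_support_map_iff]
  simp only [Set.mem_ofPred_eq]
  exact exists_congr fun r => and_comm

lemma resample_fiber {R Z : Type*} (ρ : PMF R) (F : R → Z) (z : Z) (hz : (ρ.map F) z ≠ 0) :
    (resample ρ F z).toOuterMeasure {r | F r = z} = 1 := by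
  have h := (exists_fiber_iff ρ F z).2 hz
  rw [PMF.toOuterMeasure_apply_eq_one_iff, resample, dif_pos h, PMF.support_filter]
  exact Set.inter_subset_left

open Classical in
lemma resample_apply {R Z : Type*} (ρ : PMF R) (F : R → Z) (z : Z) (r : R) :
    resample ρ F z r =
      (if z = F r then ρ r * ((ρ.map F) (F r))⁻¹ else 0) +
        {z | (ρ.map F) z = 0}.indicator 1 z * ρ r := by
  by_cases hz : (ρ.map F) z = 0
  · rw [resample, dif_neg (by rw [exists_fiber_iff]; simpa using hz)]
    -- On a null fiber `ρ r = 0`, so the infinite factor `0⁻¹` is harmless.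
    have h0 : z = F r → ρ r = 0 := by
      intro e
      by_contra hr
      exact (exists_fiber_iff ρ F z).1 ⟨r, e.symm, hr⟩ hz
    by_cases e : z = F r
    · simp [h0 e]
    · simp [e, hz, -PMF.map_apply]
  · rw [resample, dif_pos ((exists_fiber_iff ρ F z).2 hz), PMF.filter_apply, tsum_indicator_fiber]
    by_cases e : z = F r
    · subst e; simp [hz, -PMF.map_apply]
    · simp [e, Ne.symm e, hz, -PMF.map_apply]

lemma bind_resample_apply {R Z : Type*} (ρ : PMF R) (G F : R → Z) (r : R) :
    (ρ.bind fun x => resample ρ F (G x)) r =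
      ρ r * (((ρ.map F) (F r))⁻¹ * (ρ.map G) (F r)) +
        ρ r * (ρ.map G).toOuterMeasure {z | (ρ.map F) z = 0} := by
  classical
  rw [PMF.bind_apply, tsum_mul_comp_eq_map ρ G (fun z => resample ρ F z r)]
  simp_rw [resample_apply, mul_add]
  rw [ENNReal.tsum_add]
  congr 1
  · rw [tsum_eq_single (F r)]
    · simp [-PMF.map_apply]; ring
    · intro z hz; simp [hz]
  · rw [PMF.toOuterMeasure_apply, ← ENNReal.tsum_mul_left]
    refine tsum_congr fun z => ?_
    by_cases hz : (ρ.map F) z = 0 <;> simp [hz, mul_comm, -PMF.map_apply]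

/-- On preimages of events not charging the null outputs of `ρ.map F`, the reweighting of `ρ` by
the likelihood ratio has the mass prescribed by `P`. -/
lemma tsum_reweight_preimage {R Z : Type*} (ρ : PMF R) (F : R → Z) (P : PMF Z) (A : Set Z)
    (hA : ∀ z ∈ A, (ρ.map F) z ≠ 0) :
    ∑' r, (F ⁻¹' A).indicator (fun r => ρ r * (((ρ.map F) (F r))⁻¹ * P (F r))) r
      = P.toOuterMeasure A := by
  classical
  have h1 : ∀ r, (F ⁻¹' A).indicator (fun r => ρ r * (((ρ.map F) (F r))⁻¹ * P (F r))) r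
      = ρ r * (A.indicator (fun z => ((ρ.map F) z)⁻¹ * P z) (F r)) := by
    intro r
    by_cases hr : F r ∈ A <;> simp [hr]
  simp_rw [h1]
  rw [tsum_mul_comp_eq_map ρ F, PMF.toOuterMeasure_apply]
  refine tsum_congr fun z => ?_
  by_cases hz : z ∈ A
  · simp only [hz, Set.indicator_of_mem]
    rw [← mul_assoc, ENNReal.mul_inv_cancel (hA z hz) ((ρ.map F).apply_ne_top z), one_mul]
  · simp [hz]

/-- If `M(D; R) ≈_{ε,δ} M(D'; R)` for `R ∼ ρ`, then there is a joint distribution of a pair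
`(R, R')` whose first marginal is `ρ`, whose second marginal is `(ε,δ)`-indistinguishable
from `ρ`, and with `M(D; R) = M(D'; R')` with probability at least `1 − δ`. -/
theorem coupled_randomness {R Z Input : Type*} [Countable R]
    (ε δ : ℝ) (hε : 0 ≤ ε) (hδ0 : 0 ≤ δ) (hδ1 : δ < 1)
    (ρ : PMF R) (M : Input → R → Z) (D D' : Input)
    (h : pmfIndist ε δ (ρ.map (M D)) (ρ.map (M D'))) :
    ∃ joint : PMF (R × R),
      joint.map Prod.fst = ρ ∧
      pmfIndist ε δ (joint.map Prod.snd) ρ ∧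
      ENNReal.ofReal (1 - δ) ≤ joint.toOuterMeasure {p : R × R | M D p.1 = M D' p.2} := by
  classical
  set P := ρ.map (M D) with hP
  set Q := ρ.map (M D') with hQ
  set c := ENNReal.ofReal (Real.exp ε) with hc
  have hcfin : c ≠ ∞ := ENNReal.ofReal_ne_top
  set N : Set Z := {z | Q z = 0} with hN
  set s := P.toOuterMeasure N with hs
  have hQN : Q.toOuterMeasure N = 0 := by
    rw [PMF.toOuterMeasure_apply_eq_zero_iff, Set.disjoint_left]
    intro z hz hz'
    exact hz hz'
  have hsδ : s ≤ ENNReal.ofReal δ := by simpa [hQN] using (h N).1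
  let K : R → PMF R := fun x => resample ρ (M D') (M D x)
  let joint : PMF (R × R) := ρ.bind fun x => (K x).map (Prod.mk x)
  have hfst : joint.map Prod.fst = ρ := by
    simp only [joint, PMF.map_bind, PMF.map_comp]
    have : ∀ x : R, (Prod.fst ∘ Prod.mk x : R → R) = Function.const R x := fun x => rfl
    simp_rw [this, PMF.map_const]
    exact PMF.bind_pure ρ
  have hsnd : joint.map Prod.snd = ρ.bind K := by
    simp only [joint, PMF.map_bind, PMF.map_comp]
    have : ∀ x : R, (Prod.snd ∘ Prod.mk x : R → R) = id := fun x => rfl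
    simp_rw [this, PMF.map_id]
  set μ₀ : R → ℝ≥0∞ := fun r => ρ r * ((Q (M D' r))⁻¹ * P (M D' r)) with hμ₀
  have hμ : ∀ r, (ρ.bind K) r = μ₀ r + ρ r * s := bind_resample_apply ρ (M D) (M D')
  have hμE : ∀ E : Set R, (ρ.bind K).toOuterMeasure E
      = ∑' r, E.indicator μ₀ r + ρ.toOuterMeasure E * s := by
    intro E
    rw [PMF.toOuterMeasure_apply, PMF.toOuterMeasure_apply, ← ENNReal.tsum_mul_right,
      ← ENNReal.tsum_add]
    refine tsum_congr fun r => ?_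
    by_cases hr : r ∈ E <;> simp [hr, hμ]
  have le_one : ∀ (p : PMF R) (E : Set R), p.toOuterMeasure E ≤ 1 := by
    intro p E
    rw [PMF.toOuterMeasure_apply, ← p.tsum_coe]
    exact ENNReal.tsum_le_tsum fun r => Set.indicator_le_self E p r
  have hpre : ∀ A : Set Z, ∑' r, (M D' ⁻¹' A).indicator ρ r = Q.toOuterMeasure A := by
    intro A
    rw [hQ, PMF.toOuterMeasure_map_apply, PMF.toOuterMeasure_apply]
  refine ⟨joint, hfst, ?_, ?_⟩
  · rw [hsnd]
    intro E
    constructor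
    · set A : Set Z := {z | Q z ≠ 0 ∧ c < (Q z)⁻¹ * P z} with hA
      have hdisj : Disjoint A N := Set.disjoint_left.2 fun z hz hz' => hz.1 hz'
      have hPu : P.toOuterMeasure A + s = P.toOuterMeasure (A ∪ N) := by
        rw [hs, PMF.toOuterMeasure_apply, PMF.toOuterMeasure_apply, PMF.toOuterMeasure_apply,
          ← ENNReal.tsum_add, Set.indicator_union_of_disjoint hdisj]
      have hQu : Q.toOuterMeasure (A ∪ N) ≤ Q.toOuterMeasure A := by
        simpa [hQN] using MeasureTheory.measure_union_le (μ := Q.toOuterMeasure) A N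
      have main := sum_indicator_le_of_worst μ₀ ρ c s (ENNReal.ofReal δ) (M D' ⁻¹' A) E ?_ ?_ ?_ ?_
      · rw [hμE, PMF.toOuterMeasure_apply (p := ρ) (s := E)] at *
        refine le_trans ?_ main
        gcongr
        rw [← PMF.toOuterMeasure_apply]
        exact mul_le_of_le_one_left zero_le (le_one ρ E)
      · intro r hr
        rw [mul_comm]
        exact mul_le_mul_right hr.2.le _
      · intro r hr
        by_cases h0 : ρ r = 0
        · simp [hμ₀, h0]
        have hQr : Q (M D' r) ≠ 0 := (exists_fiber_iff ρ (M D') _).1 ⟨r, rfl, h0⟩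
        have : (Q (M D' r))⁻¹ * P (M D' r) ≤ c := not_lt.1 fun hlt => hr ⟨hQr, hlt⟩
        rw [mul_comm c]
        exact mul_le_mul_right this _
      · rw [← PMF.toOuterMeasure_apply]
        exact ENNReal.mul_ne_top hcfin (ne_top_of_le_ne_top ENNReal.one_ne_top (le_one _ _))
      · rw [tsum_reweight_preimage ρ (M D') P A fun z hz => hz.1, hpre, hPu]
        exact (h _).1.trans (by gcongr)
    · set A : Set Z := {z | Q z ≠ 0 ∧ c * ((Q z)⁻¹ * P z) < 1} with hA
      have hm := tsum_reweight_preimage ρ (M D') P A fun z hz => hz.1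
      have main := sum_indicator_le_of_worst ρ μ₀ c 0 (ENNReal.ofReal δ) (M D' ⁻¹' A) E ?_ ?_ ?_ ?_
      · rw [hμE, PMF.toOuterMeasure_apply (p := ρ) (s := E)]
        rw [add_zero] at main
        refine main.trans ?_
        gcongr
        exact le_self_add
      · intro r hr
        calc c * μ₀ r = ρ r * (c * ((Q (M D' r))⁻¹ * P (M D' r))) := by simp only [hμ₀]; ring
          _ ≤ ρ r * 1 := mul_le_mul_right hr.2.le _
          _ = ρ r := mul_one _
      · intro r hr
        by_cases h0 : ρ r = 0
        · simp [h0]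
        have hQr : Q (M D' r) ≠ 0 := (exists_fiber_iff ρ (M D') _).1 ⟨r, rfl, h0⟩
        have : 1 ≤ c * ((Q (M D' r))⁻¹ * P (M D' r)) := not_lt.1 fun hlt => hr ⟨hQr, hlt⟩
        calc ρ r = ρ r * 1 := (mul_one _).symm
          _ ≤ ρ r * (c * ((Q (M D' r))⁻¹ * P (M D' r))) := mul_le_mul_right this _
          _ = c * μ₀ r := by simp only [hμ₀]; ring
      · have hle : ∑' r, (M D' ⁻¹' A).indicator μ₀ r ≤ 1 :=
          (le_self_add.trans (hμE _).ge).trans (le_one _ _)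
        exact ENNReal.mul_ne_top hcfin (ne_top_of_le_ne_top ENNReal.one_ne_top hle)
      · rw [hm, hpre, add_zero]
        exact (h A).2
  · have hgood : 1 ≤ joint.toOuterMeasure {p : R × R | M D p.1 = M D' p.2} + s := by
      have hsρ : s = ∑' r, (M D ⁻¹' N).indicator ρ r := by
        rw [hs, hP, PMF.toOuterMeasure_map_apply, PMF.toOuterMeasure_apply]
      rw [hsρ, ← ρ.tsum_coe, PMF.toOuterMeasure_bind_apply, ← ENNReal.tsum_add]
      refine ENNReal.tsum_le_tsum fun r => ?_
      by_cases hr : Q (M D r) = 0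
      · have : r ∈ M D ⁻¹' N := hr
        simp [this]
      · have h1 := resample_fiber ρ (M D') (M D r) hr
        have h2 : (Prod.mk r ⁻¹' {p : R × R | M D p.1 = M D' p.2})
            = {r' | M D' r' = M D r} := by
          ext r'; simp [eq_comm]
        rw [PMF.toOuterMeasure_map_apply, h2, h1, mul_one]
        exact le_self_add
    rw [ENNReal.ofReal_sub _ hδ0, ENNReal.ofReal_one, tsub_le_iff_right]
    exact hgood.trans (by gcongr)
end

section
/- Group privacy: Let ε > 0, δ ≥ 0, and k ∈ ℕ, and let M : X^n → Y be (ε,δ)-differentially private. Then M is (kε, δ·(e^{kε} − 1)/(e^ε − 1))-differentially private for groups of size k: for all datasets D, D' ∈ X^n differing in at most k coordinates and all measurable sets E ⊆ Y, Pr[M(D) ∈ E] ≤ e^{kε}·Pr[M(D') ∈ E] + δ·(e^{kε} − 1)/(e^ε − 1). -/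
/-!
Change the coordinates on which `D` and `D'` differ one at a time. Each change costs one application
of `(ε,δ)`-privacy, so the additive errors `a k` obey `a (k+1) = e^ε * a k + δ` with `a 0 = 0`,
whose solution is the geometric sum `δ * (e^{kε} - 1) / (e^ε - 1)`.
-/

open MeasureTheory
open scoped ENNReal

/-- Two datasets are neighbors if they differ in at most one coordinate. -/
def Neighbors {X : Type*} {n : ℕ} (D D' : Fin n → X) : Prop :=
  ∃ i : Fin n, ∀ j : Fin n, j ≠ i → D j = D' j

/-- A randomized algorithm `M : X^n → Y` is `(ε,δ)`-differentially private if for every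
pair of neighboring datasets `D, D'` and every measurable event `E`,
`Pr[M(D) ∈ E] ≤ e^ε·Pr[M(D') ∈ E] + δ`. -/
def DP {X Y : Type*} [MeasurableSpace Y] {n : ℕ} (ε δ : ℝ)
    (M : (Fin n → X) → Measure Y) : Prop :=
  ∀ D D' : Fin n → X, Neighbors D D' → ∀ E : Set Y, MeasurableSet E →
    M D E ≤ ENNReal.ofReal (Real.exp ε) * M D' E + ENNReal.ofReal δ

/-- Group privacy: an `(ε,δ)`-differentially private mechanism is
`(kε, δ·(e^{kε} − 1)/(e^ε − 1))`-differentially private for groups of size `k`: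
for datasets differing in at most `k` coordinates and measurable `E ⊆ Y`,
`Pr[M(D) ∈ E] ≤ e^{kε}·Pr[M(D') ∈ E] + δ·(e^{kε} − 1)/(e^ε − 1)`. -/
theorem dp_group_privacy {X Y : Type*} [MeasurableSpace Y] {n : ℕ}
    (ε δ : ℝ) (hε : 0 < ε) (hδ : 0 ≤ δ) (k : ℕ)
    (M : (Fin n → X) → Measure Y)
    (hDP : DP ε δ M)
    (D D' : Fin n → X)
    (hk : ∃ s : Finset (Fin n), s.card ≤ k ∧ ∀ j ∉ s, D j = D' j)
    (E : Set Y) (hE : MeasurableSet E) :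
    M D E ≤ ENNReal.ofReal (Real.exp (k * ε)) * M D' E +
      ENNReal.ofReal (δ * (Real.exp (k * ε) - 1) / (Real.exp ε - 1)) := by
  have hden : 0 < Real.exp ε - 1 := by
    have := Real.one_lt_exp_iff.mpr hε
    linarith
  have hnum (m : ℕ) : 1 ≤ Real.exp (m * ε) := Real.one_le_exp (by positivity)
  induction k generalizing D with
  | zero =>
    obtain ⟨s, hs, hD⟩ := hk
    have hs0 : s = ∅ := by simpa using hs
    have hDD : D = D' := funext fun j => hD j (by simp [hs0])
    simp [hDD]
  | succ k ih =>
    obtain ⟨s, hs, hD⟩ := hk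
    rcases s.eq_empty_or_nonempty with hs0 | ⟨i, hi⟩
    · have hDD : D = D' := funext fun j => hD j (by simp [hs0])
      rw [hDD]
      refine le_add_right (le_mul_of_one_le_left' ?_)
      exact ENNReal.one_le_ofReal.mpr (hnum (k + 1))
    · have hnb : Neighbors D (Function.update D i (D' i)) :=
        ⟨i, fun j hj => (Function.update_of_ne hj _ _).symm⟩
      have hrest := ih (Function.update D i (D' i)) ⟨s.erase i, by
        rw [Finset.card_erase_of_mem hi]; omega, fun j hj => by
          by_cases hji : j = i
          · subst hji; simp
          · rw [Function.update_of_ne hji]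
            exact hD j fun h => hj (Finset.mem_erase.mpr ⟨hji, h⟩)⟩
      have ha : 0 ≤ δ * (Real.exp (k * ε) - 1) / (Real.exp ε - 1) :=
        div_nonneg (mul_nonneg hδ (by linarith [hnum k])) hden.le
      have hexp : Real.exp ((k + 1 : ℕ) * ε) = Real.exp ε * Real.exp (k * ε) := by
        rw [← Real.exp_add]; push_cast; ring_nf
      have hrec : δ * (Real.exp ((k + 1 : ℕ) * ε) - 1) / (Real.exp ε - 1) =
          Real.exp ε * (δ * (Real.exp (k * ε) - 1) / (Real.exp ε - 1)) + δ := by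
        rw [hexp]
        field_simp [hden.ne']
        ring
      calc M D E
          ≤ ENNReal.ofReal (Real.exp ε) * M (Function.update D i (D' i)) E + ENNReal.ofReal δ :=
            hDP _ _ hnb E hE
        _ ≤ ENNReal.ofReal (Real.exp ε) * (ENNReal.ofReal (Real.exp (k * ε)) * M D' E +
              ENNReal.ofReal (δ * (Real.exp (k * ε) - 1) / (Real.exp ε - 1))) +
              ENNReal.ofReal δ := by gcongr
        _ = _ := by
            rw [hrec, hexp, ENNReal.ofReal_add (by positivity) hδ,
              ENNReal.ofReal_mul (Real.exp_pos ε).le, ENNReal.ofReal_mul (Real.exp_pos ε).le]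
            ring
end

section
/- If an abstract data type supports logical deletion, then it is reversible. -/
/-!
From the state reached by a nonempty sequence `σ`, deleting the identifier of one of its
operations leads to the state reached by a strictly shorter sequence. Iterating, the initial state
can be recovered from every reachable state (`ADT.exists_runFrom_run_eq_init`), and from there any
other reachable state is attained by running a sequence that witnesses its reachability.
-/

/-- An abstract data type: a set of operations `Op`, logical states `S` with an initial
state, and a deterministic transition function. -/
structure ADT (Op S : Type*) where
  init : S
  step : Op → S → S

/-- The logical state reached by applying a finite sequence of operations starting
from state `s`. -/
def ADT.runFrom {Op S : Type*} (A : ADT Op S) (s : S) (σ : List Op) : S :=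
  σ.foldl (fun t op => A.step op t) s

/-- The logical state `ADT(σ).state` reached from the initial state. -/
def ADT.run {Op S : Type*} (A : ADT Op S) (σ : List Op) : S :=
  A.runFrom A.init σ

/-- A logical state is reachable if some finite operation sequence leads to it from the
initial state. -/
def ADT.Reachable {Op S : Type*} (A : ADT Op S) (s : S) : Prop :=
  ∃ σ : List Op, A.run σ = s

/-- An ADT is reversible if all reachable states are mutually reachable. -/
def ADT.Reversible {Op S : Type*} (A : ADT Op S) : Prop :=
  ∀ a b : S, A.Reachable a → A.Reachable b → ∃ τ : List Op, A.runFrom a τ = b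

/-- An ADT (with operations tagged by identifiers via `tag`) supports logical deletion if
there is, for each identifier `id`, an operation `del id` such that appending `del id` to
any sequence `σ` is logically equivalent to removing from `σ` every operation tagged `id`. -/
def ADT.SupportsLogicalDeletion {Op S ID : Type*} [DecidableEq ID]
    (A : ADT Op S) (tag : Op → ID) (del : ID → Op) : Prop :=
  ∀ (σ : List Op) (id : ID),
    A.run (σ ++ [del id]) = A.run (σ.filter fun op => decide (tag op ≠ id))

theorem ADT.runFrom_append {Op S : Type*} (A : ADT Op S) (s : S) (σ τ : List Op) :
    A.runFrom s (σ ++ τ) = A.runFrom (A.runFrom s σ) τ :=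
  List.foldl_append

theorem ADT.exists_runFrom_run_eq_init {Op S ID : Type*} [DecidableEq ID]
    (A : ADT Op S) (tag : Op → ID) (del : ID → Op)
    (h : A.SupportsLogicalDeletion tag del) :
    ∀ σ : List Op, ∃ τ : List Op, A.runFrom (A.run σ) τ = A.init
  | [] => ⟨[], rfl⟩
  | op :: σ => by
    -- Deleting `tag op` removes at least the head, so the remaining sequence is shorter.
    have hlen : ((op :: σ).filter fun o => decide (tag o ≠ tag op)).length < (op :: σ).length := by
      have := List.length_filter_le (fun o => decide (tag o ≠ tag op)) σ
      simp only [ne_eq, not_true_eq_false, decide_false, Bool.false_eq_true, not_false_eq_true,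
        List.filter_cons_of_neg, List.length_cons] at this ⊢
      omega
    obtain ⟨τ, hτ⟩ := A.exists_runFrom_run_eq_init tag del h
      ((op :: σ).filter fun o => decide (tag o ≠ tag op))
    refine ⟨[del (tag op)] ++ τ, ?_⟩
    have hdel : A.runFrom (A.run (op :: σ)) [del (tag op)] =
        A.run ((op :: σ).filter fun o => decide (tag o ≠ tag op)) := by
      rw [← h, ADT.run, ADT.run, A.runFrom_append]
    rw [A.runFrom_append, hdel, hτ]
termination_by σ => σ.length
decreasing_by exact hlen

/-- If an abstract data type supports logical deletion, then it is reversible. -/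
theorem logical_deletion_implies_reversible {Op S ID : Type*} [Countable Op] [DecidableEq ID]
    (A : ADT Op S) (tag : Op → ID) (del : ID → Op)
    (h : A.SupportsLogicalDeletion tag del) :
    A.Reversible := by
  rintro a b ⟨σ, rfl⟩ ⟨ρ, rfl⟩
  obtain ⟨τ, hτ⟩ := A.exists_runFrom_run_eq_init tag del h σ
  exact ⟨τ ++ ρ, by rw [A.runFrom_append, hτ, ADT.run]⟩
end

section
/- Shifted Laplace distributions are eventually distinguishable: Let ε > 0 and let L_ε denote the Laplace distribution on ℝ with density (ε/2)·e^{−ε|x|}. For every ε' ≥ 0 and δ' ∈ [0,1), there exists n ∈ ℕ such that the distribution of n + Z for Z ∼ L_ε and the distribution of Z are not (ε',δ')-indistinguishable; in fact, any n with (1/2)·(1 + e^{ε'})·e^{−εn/2} < 1 − δ' works, witnessed by the event [n/2, ∞). (This is the core of the claim that the batch controller running the Laplace counting mechanism satisfies deletion-as-control but is not (ε',δ')-history independent for any ε' < ∞ and δ' < 1.) -/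
/-!
The tails of the Laplace law are explicit: `P(Z > c) = P(Z ≤ -c) = (1/2)·e^{-εc}` for `c ≥ 0`
(`laplace_Ioi`, `laplace_Iic`). Taking `c = n/2`, the event `[n/2, ∞)` has probability at least
`1 - (1/2)·e^{-εn/2}` under `n + Z` and exactly `(1/2)·e^{-εn/2}` under `Z`.
Indistinguishability on this event would therefore give
`1 - (1/2)·e^{-εn/2} ≤ e^{ε'}·(1/2)·e^{-εn/2} + δ'`, which is the negation of the assumed
inequality. Since `e^{-εn/2} → 0`, a suitable `n` exists.
-/

open MeasureTheory
open scoped ENNReal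

/-- The Laplace distribution on ℝ with density `(ε/2)·e^{−ε|x|}` with respect to
Lebesgue measure. -/
noncomputable def laplace (ε : ℝ) : Measure ℝ :=
  volume.withDensity fun x => ENNReal.ofReal (ε / 2 * Real.exp (-ε * |x|))

/-- `(ε,δ)`-indistinguishability of two measures: for every measurable event `E`,
`P(E) ≤ e^ε·Q(E) + δ` and `Q(E) ≤ e^ε·P(E) + δ`. -/
def mIndist {X : Type*} [MeasurableSpace X] (ε δ : ℝ) (P Q : Measure X) : Prop :=
  ∀ E : Set X, MeasurableSet E →
    P E ≤ ENNReal.ofReal (Real.exp ε) * Q E + ENNReal.ofReal δ ∧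
    Q E ≤ ENNReal.ofReal (Real.exp ε) * P E + ENNReal.ofReal δ

lemma laplace_Ioi (ε : ℝ) (hε : 0 < ε) (c : ℝ) (hc : 0 ≤ c) :
    laplace ε (Set.Ioi c) = ENNReal.ofReal (1 / 2 * Real.exp (-ε * c)) := by
  have hneg : -ε < 0 := by linarith
  rw [laplace, withDensity_apply _ measurableSet_Ioi]
  have hcongr : ∫⁻ x in Set.Ioi c, ENNReal.ofReal (ε / 2 * Real.exp (-ε * |x|)) =
      ∫⁻ x in Set.Ioi c, ENNReal.ofReal (ε / 2 * Real.exp (-ε * x)) := by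
    refine setLIntegral_congr_fun measurableSet_Ioi fun x hx => ?_
    simp only [abs_of_pos (lt_of_le_of_lt hc hx)]
  rw [hcongr, ← ofReal_integral_eq_lintegral_ofReal
    ((integrableOn_exp_mul_Ioi hneg c).const_mul (ε / 2))
    (Filter.Eventually.of_forall fun x => by positivity),
    integral_const_mul, integral_exp_mul_Ioi hneg]
  congr 1
  field_simp

lemma laplace_Iic (ε : ℝ) (hε : 0 < ε) (c : ℝ) (hc : c ≤ 0) :
    laplace ε (Set.Iic c) = ENNReal.ofReal (1 / 2 * Real.exp (ε * c)) := by
  rw [laplace, withDensity_apply _ measurableSet_Iic]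
  have hcongr : ∫⁻ x in Set.Iic c, ENNReal.ofReal (ε / 2 * Real.exp (-ε * |x|)) =
      ∫⁻ x in Set.Iic c, ENNReal.ofReal (ε / 2 * Real.exp (ε * x)) := by
    refine setLIntegral_congr_fun measurableSet_Iic fun x hx => ?_
    simp only [abs_of_nonpos (le_trans hx hc), neg_mul_neg]
  rw [hcongr, ← ofReal_integral_eq_lintegral_ofReal
    ((integrableOn_exp_mul_Iic hε c).const_mul (ε / 2))
    (Filter.Eventually.of_forall fun x => by positivity),
    integral_const_mul, integral_exp_mul_Iic hε]
  congr 1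
  field_simp

lemma laplace_Ici (ε : ℝ) (hε : 0 < ε) (c : ℝ) (hc : 0 ≤ c) :
    laplace ε (Set.Ici c) = ENNReal.ofReal (1 / 2 * Real.exp (-ε * c)) := by
  rw [← laplace_Ioi ε hε c hc]
  exact measure_congr ((withDensity_absolutelyContinuous _ _).ae_eq Ioi_ae_eq_Ici.symm)

lemma laplace_univ (ε : ℝ) (hε : 0 < ε) : laplace ε Set.univ = 1 := by
  rw [← Set.Iic_union_Ioi (a := (0 : ℝ)),
    measure_union (Set.Iic_disjoint_Ioi le_rfl) measurableSet_Ioi,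
    laplace_Ioi ε hε 0 le_rfl, laplace_Iic ε hε 0 le_rfl,
    ← ENNReal.ofReal_add (by positivity) (by positivity)]
  norm_num

/-- The event `[n/2, ∞)` separates `n + Z` from `Z` as soon as `n` is large enough. -/
lemma laplace_shift_witness (ε : ℝ) (hε : 0 < ε) (ε' δ' : ℝ) (hδ'0 : 0 ≤ δ') (n : ℕ)
    (hn : (1 / 2) * (1 + Real.exp ε') * Real.exp (-(ε * n) / 2) < 1 - δ') :
    ¬ (((laplace ε).map fun x => (n : ℝ) + x) (Set.Ici ((n : ℝ) / 2)) ≤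
      ENNReal.ofReal (Real.exp ε') * (laplace ε) (Set.Ici ((n : ℝ) / 2)) +
        ENNReal.ofReal δ') := by
  intro h
  have hn0 : (0 : ℝ) ≤ n / 2 := by positivity
  have hpre : (fun x : ℝ => (n : ℝ) + x) ⁻¹' Set.Ici ((n : ℝ) / 2) =
      Set.Ici (-((n : ℝ) / 2)) := by
    ext x
    simp only [Set.mem_preimage, Set.mem_Ici]
    constructor <;> intro hx <;> linarith
  rw [Measure.map_apply (measurable_const_add _) measurableSet_Ici, hpre,
    laplace_Ici ε hε _ hn0] at h
  have hmass : (1 : ℝ≥0∞) ≤ laplace ε (Set.Iic (-((n : ℝ) / 2))) +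
      laplace ε (Set.Ici (-((n : ℝ) / 2))) := by
    rw [← laplace_univ ε hε, ← Set.Iic_union_Ici (a := -((n : ℝ) / 2))]
    exact measure_union_le _ _
  rw [laplace_Iic ε hε _ (by linarith)] at hmass
  have e₁ : ε * -((n : ℝ) / 2) = -(ε * n) / 2 := by ring
  have e₂ : -ε * ((n : ℝ) / 2) = -(ε * n) / 2 := by ring
  rw [e₁] at hmass
  rw [e₂] at h
  have hfin := hmass.trans (add_le_add_right h _)
  rw [← ENNReal.ofReal_mul (by positivity), ← ENNReal.ofReal_add (by positivity) hδ'0,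
    ← ENNReal.ofReal_add (by positivity) (by positivity), ENNReal.one_le_ofReal] at hfin
  linarith

lemma exists_shift (ε : ℝ) (hε : 0 < ε) (ε' δ' : ℝ) (hδ'1 : δ' < 1) :
    ∃ n : ℕ, (1 / 2) * (1 + Real.exp ε') * Real.exp (-(ε * n) / 2) < 1 - δ' := by
  have h₁ : Filter.Tendsto (fun n : ℕ => ε / 2 * (n : ℝ)) Filter.atTop Filter.atTop :=
    tendsto_natCast_atTop_atTop.const_mul_atTop (by positivity)
  have h₂ := (Real.tendsto_exp_neg_atTop_nhds_zero.comp h₁).const_mul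
    ((1 / 2) * (1 + Real.exp ε'))
  rw [mul_zero] at h₂
  obtain ⟨n, hn⟩ := (h₂.eventually_lt_const (sub_pos.mpr hδ'1)).exists
  refine ⟨n, ?_⟩
  have e : -(ε * n) / 2 = -(ε / 2 * (n : ℝ)) := by ring
  rw [e]
  exact hn

/-- Shifted Laplace distributions are eventually distinguishable: for every `ε' ≥ 0` and
`δ' ∈ [0,1)` there is `n ∈ ℕ` such that the distributions of `n + Z` and of `Z`, for
`Z ∼ Lap(1/ε)`, are not `(ε',δ')`-indistinguishable; in fact any `n` with
`(1/2)·(1 + e^{ε'})·e^{−εn/2} < 1 − δ'` works, witnessed by the event `[n/2, ∞)`. -/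
theorem shifted_laplace_distinguishable (ε : ℝ) (hε : 0 < ε)
    (ε' δ' : ℝ) (hε' : 0 ≤ ε') (hδ'0 : 0 ≤ δ') (hδ'1 : δ' < 1) :
    (∃ n : ℕ, ¬ mIndist ε' δ' ((laplace ε).map fun x => (n : ℝ) + x) (laplace ε)) ∧
    (∀ n : ℕ, (1 / 2) * (1 + Real.exp ε') * Real.exp (-(ε * n) / 2) < 1 - δ' →
      ¬ (((laplace ε).map fun x => (n : ℝ) + x) (Set.Ici ((n : ℝ) / 2)) ≤
          ENNReal.ofReal (Real.exp ε') * (laplace ε) (Set.Ici ((n : ℝ) / 2)) +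
            ENNReal.ofReal δ')) := by
  refine ⟨?_, fun n hn => laplace_shift_witness ε hε ε' δ' hδ'0 n hn⟩
  obtain ⟨n, hn⟩ := exists_shift ε hε ε' δ' hδ'1
  exact ⟨n, fun h => laplace_shift_witness ε hε ε' δ' hδ'0 n hn (h _ measurableSet_Ici).1⟩
end
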